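/- Let f : (C^n,0) → (C,0) be a singularity nondegenerate in the Kouchnirenko sense, let φ ∈ C{t}^n be a parametrization with φ_i ≠ 0 for all i, and let L be the supporting hyperplane to Γ_+(f) orthogonal to w = (ord φ_1,...,ord φ_n). Then ∇f ∘ φ ≠ 0 and ord(∇f ∘ φ)/ord φ ≤ m(L) − 1, where ord φ = min_i ord φ_i, ord(∇f∘φ) = min_i ord((∂f/∂z_i)∘φ), and m(L) is the maximum axis intercept of L. -/

import Mathlib

/-!
Write `φ_j = t^{w_j} ψ_j` with `ψ_j(0) = c_j ≠ 0`, and let `S` be the face of `Γ₊(f)` orthogonal to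
`w`, on which `⟨w, ·⟩ = l`. All `w_j` are positive, so `S` is a compact face and nondegeneracy at
the point `c` of the torus yields an `i` with `∂_i f_S(c) ≠ 0`. Every monomial of `f` has weighted
degree at least `l`, so `t^{w_i} ∂_i f(φ(t)) = ∂_i f_S(c) t^l + o(t^l)`. Hence `∂_i f ∘ φ` is nonzero
of order at most `l - w_i`; dividing by `ord φ = w_k = min_j w_j ≤ w_i` gives
`ord(∇f ∘ φ) / ord φ ≤ l / w_k - 1 ≤ m(L) - 1`.

The leading term comes from splitting `f` into a Taylor polynomial, whose terms are followed along
`φ` one by one (`tendsto_poly`), and a remainder (`tendsto_error`). The remainder is controlled by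
`isBigO_of_mder`: an analytic germ whose partial derivatives of order `< N` vanish at `0` is
`O(‖z‖^N)`. Symmetry of mixed partials (`mder_add_single`) reduces all statements about `mder` to
inductions on the multi-index.
-/

open Finset Filter Topology

/-- The `i`-th partial derivative of `f`. -/
noncomputable def pder {n : ℕ} (i : Fin n) (f : (Fin n → ℂ) → ℂ) : (Fin n → ℂ) → ℂ :=
  fun z => fderiv ℂ f z (Pi.single i 1)

/-- The iterated partial derivative `∂^ν f` for a multi-index `ν`. -/
noncomputable def mder {n : ℕ} (ν : Fin n → ℕ) (f : (Fin n → ℂ) → ℂ) : (Fin n → ℂ) → ℂ :=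
  ((List.finRange n).map fun i => (pder i)^[ν i]).foldr (fun g acc => g acc) f

/-- The support of the Taylor expansion of `f` at `0`. -/
def NSupp {n : ℕ} (f : (Fin n → ℂ) → ℂ) : Set (Fin n → ℕ) :=
  {ν | mder ν f 0 ≠ 0}

/-- The Taylor coefficient `a_ν` of `f` at `0`. -/
noncomputable def coeffOf {n : ℕ} (f : (Fin n → ℂ) → ℂ) (ν : Fin n → ℕ) : ℂ :=
  mder ν f 0 / ((∏ i, (ν i).factorial : ℕ) : ℂ)

/-- The Newton diagram `Γ₊(f)`: the convex hull of `⋃_{ν ∈ supp f} (ν + ℝ₊ⁿ)`. -/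
def NDiag {n : ℕ} (f : (Fin n → ℂ) → ℂ) : Set (Fin n → ℝ) :=
  convexHull ℝ {x | ∃ ν ∈ NSupp f, ∀ i, (ν i : ℝ) ≤ x i}

/-- `l(u, A) = inf {⟨u, v⟩ : v ∈ A}`. -/
noncomputable def ell {n : ℕ} (u : Fin n → ℝ) (A : Set (Fin n → ℝ)) : ℝ :=
  sInf ((fun v => ∑ i, u i * v i) '' A)

/-- The face `Δ(u, A) = {v ∈ A : ⟨u, v⟩ = l(u, A)}`. -/
def faceOf {n : ℕ} (u : Fin n → ℝ) (A : Set (Fin n → ℝ)) : Set (Fin n → ℝ) :=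
  {v | v ∈ A ∧ ∑ i, u i * v i = ell u A}

/-- `S` is a compact face of the Newton diagram of `f` (member of the Newton boundary). -/
def IsCompactFace {n : ℕ} (f : (Fin n → ℂ) → ℂ) (S : Set (Fin n → ℝ)) : Prop :=
  ∃ u : Fin n → ℝ, (∀ i, 0 < u i) ∧ S = faceOf u (NDiag f)

/-- The dimension of a face, as the rank of the direction of its affine span. -/
noncomputable def faceDim {n : ℕ} (S : Set (Fin n → ℝ)) : ℕ :=
  Module.finrank ℝ (affineSpan ℝ S).direction

/-- `Γ^k(f)`: the `k`-dimensional compact faces of the Newton boundary of `f`. -/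
def GammaK {n : ℕ} (f : (Fin n → ℂ) → ℂ) (k : ℕ) : Set (Set (Fin n → ℝ)) :=
  {S | IsCompactFace f S ∧ faceDim S = k}

/-- The quasihomogeneous polynomial `f_S = Σ_{ν ∈ S} a_ν z^ν`. -/
noncomputable def facePoly {n : ℕ} (f : (Fin n → ℂ) → ℂ) (S : Set (Fin n → ℝ)) :
    (Fin n → ℂ) → ℂ :=
  fun z => ∑' ν : {ν : Fin n → ℕ // (fun i => (ν i : ℝ)) ∈ S}, coeffOf f ν.1 * ∏ i, z i ^ ν.1 i

/-- `f` is nondegenerate in the Kouchnirenko sense. -/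
def Nondeg {n : ℕ} (f : (Fin n → ℂ) → ℂ) : Prop :=
  ∀ S, IsCompactFace f S →
    ¬∃ z : Fin n → ℂ, (∀ i, z i ≠ 0) ∧ ∀ i, pder i (facePoly f S) z = 0

/-- `f` is a singularity: a nonzero holomorphic germ with `f 0 = 0`, `∇f 0 = 0`. -/
def IsSing {n : ℕ} (f : (Fin n → ℂ) → ℂ) : Prop :=
  AnalyticAt ℂ f 0 ∧ (¬∀ᶠ z in 𝓝 0, f z = 0) ∧ f 0 = 0 ∧ ∀ i, pder i f 0 = 0

/-- `f` is an isolated singularity: `∇f` has an isolated zero at `0`. -/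
def IsIsolSing {n : ℕ} (f : (Fin n → ℂ) → ℂ) : Prop :=
  IsSing f ∧ ∃ r > (0 : ℝ), ∀ z : Fin n → ℂ, ‖z‖ < r → z ≠ 0 → ∃ i, pder i f z ≠ 0

/-- The order of a one-variable holomorphic germ at `0`. -/
noncomputable def ord1 (φ : ℂ → ℂ) : ℕ := sInf {m | iteratedDeriv m φ 0 ≠ 0}

/-- The initial term `in φ = c·t^{ord φ}` of a one-variable holomorphic germ. -/
noncomputable def ini1 (φ : ℂ → ℂ) : ℂ → ℂ :=
  fun t => (iteratedDeriv (ord1 φ) φ 0 / ((ord1 φ).factorial : ℂ)) * t ^ ord1 φ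

/-- `φ` is a parametrization with all coordinates nonzero: each `φ i` is holomorphic
at `0`, vanishes at `0`, and is not identically zero near `0`. -/
def IsParam {n : ℕ} (φ : Fin n → ℂ → ℂ) : Prop :=
  ∀ i, AnalyticAt ℂ (φ i) 0 ∧ φ i 0 = 0 ∧ ¬∀ᶠ t in 𝓝 (0 : ℂ), φ i t = 0

/-! ### Iterated partial derivatives at the origin -/

lemma analyticAt_pder {n : ℕ} {f : (Fin n → ℂ) → ℂ} {z : Fin n → ℂ}
    (hf : AnalyticAt ℂ f z) (i : Fin n) : AnalyticAt ℂ (pder i f) z := by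
  have h := hf.fderiv
  exact ((ContinuousLinearMap.apply ℂ ℂ (Pi.single i 1 : Fin n → ℂ)).analyticAt _).comp h

lemma analyticAt_pder_iterate {n : ℕ} {f : (Fin n → ℂ) → ℂ} {z : Fin n → ℂ}
    (hf : AnalyticAt ℂ f z) (i : Fin n) (k : ℕ) : AnalyticAt ℂ ((pder i)^[k] f) z := by
  induction k with
  | zero => exact hf
  | succ k ih => rw [Function.iterate_succ_apply']; exact analyticAt_pder ih i

lemma pder_congr {n : ℕ} {f g : (Fin n → ℂ) → ℂ} {z : Fin n → ℂ}
    (h : f =ᶠ[𝓝 z] g) (i : Fin n) : pder i f =ᶠ[𝓝 z] pder i g := by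
  filter_upwards [h.fderiv (𝕜 := ℂ)] with y hy
  simp only [pder, hy]

lemma pder_iterate_congr {n : ℕ} {f g : (Fin n → ℂ) → ℂ} {z : Fin n → ℂ}
    (h : f =ᶠ[𝓝 z] g) (i : Fin n) (k : ℕ) : (pder i)^[k] f =ᶠ[𝓝 z] (pder i)^[k] g := by
  induction k with
  | zero => exact h
  | succ k ih => simp only [Function.iterate_succ_apply']; exact pder_congr ih i

lemma pder_comm {n : ℕ} {f : (Fin n → ℂ) → ℂ} {z : Fin n → ℂ}
    (hf : AnalyticAt ℂ f z) (i j : Fin n) : pder i (pder j f) =ᶠ[𝓝 z] pder j (pder i f) := by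
  have key : ∀ y, AnalyticAt ℂ f y → ∀ i j : Fin n, pder i (pder j f) y =
      fderiv ℂ (fderiv ℂ f) y (Pi.single i 1) (Pi.single j 1) := by
    intro y hy i j
    have hd : HasFDerivAt (fderiv ℂ f) (fderiv ℂ (fderiv ℂ f) y) y :=
      hy.fderiv.differentiableAt.hasFDerivAt
    have h2 : HasFDerivAt (pder j f) ((ContinuousLinearMap.apply ℂ ℂ
        (Pi.single j 1 : Fin n → ℂ)).comp (fderiv ℂ (fderiv ℂ f) y)) y :=
      (ContinuousLinearMap.apply ℂ ℂ (Pi.single j 1 : Fin n → ℂ)).hasFDerivAt.comp y hd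
    simp only [pder] at h2 ⊢
    rw [h2.fderiv]
    rfl
  filter_upwards [hf.eventually_analyticAt] with y hy
  rw [key y hy, key y hy]
  have hs : IsSymmSndFDerivAt ℂ f y :=
    (hy.contDiffAt (n := 2)).isSymmSndFDerivAt (by simp)
  exact hs _ _

lemma pder_iterate_comm {n : ℕ} {f : (Fin n → ℂ) → ℂ} {z : Fin n → ℂ}
    (hf : AnalyticAt ℂ f z) (i j : Fin n) (k : ℕ) :
    pder i ((pder j)^[k] f) =ᶠ[𝓝 z] (pder j)^[k] (pder i f) := by
  induction k with
  | zero => rfl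
  | succ k ih =>
    simp only [Function.iterate_succ_apply']
    exact (pder_comm (analyticAt_pder_iterate hf j k) i j).trans (pder_congr ih j)

/-- The iterated partial derivative along the variables in the list `l` only. -/
noncomputable def lder {n : ℕ} (l : List (Fin n)) (ν : Fin n → ℕ) (f : (Fin n → ℂ) → ℂ) :
    (Fin n → ℂ) → ℂ :=
  (l.map fun i => (pder i)^[ν i]).foldr (fun g acc => g acc) f

lemma lder_cons {n : ℕ} (j : Fin n) (l : List (Fin n)) (ν : Fin n → ℕ) (f : (Fin n → ℂ) → ℂ) :
    lder (j :: l) ν f = (pder j)^[ν j] (lder l ν f) := rfl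

lemma analyticAt_lder {n : ℕ} {f : (Fin n → ℂ) → ℂ} {z : Fin n → ℂ}
    (hf : AnalyticAt ℂ f z) (l : List (Fin n)) (ν : Fin n → ℕ) :
    AnalyticAt ℂ (lder l ν f) z := by
  induction l with
  | nil => exact hf
  | cons j l ih => rw [lder_cons]; exact analyticAt_pder_iterate ih j _

lemma lder_congr {n : ℕ} {f g : (Fin n → ℂ) → ℂ} {z : Fin n → ℂ}
    (h : f =ᶠ[𝓝 z] g) (l : List (Fin n)) (ν : Fin n → ℕ) :
    lder l ν f =ᶠ[𝓝 z] lder l ν g := by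
  induction l with
  | nil => exact h
  | cons j l ih => simp only [lder_cons]; exact pder_iterate_congr ih j _

lemma pder_lder {n : ℕ} {f : (Fin n → ℂ) → ℂ} {z : Fin n → ℂ}
    (hf : AnalyticAt ℂ f z) (i : Fin n) (l : List (Fin n)) (ν : Fin n → ℕ) :
    pder i (lder l ν f) =ᶠ[𝓝 z] lder l ν (pder i f) := by
  induction l with
  | nil => rfl
  | cons j l ih =>
    simp only [lder_cons]
    exact (pder_iterate_comm (analyticAt_lder hf l ν) i j _).trans (pder_iterate_congr ih j _)

lemma lder_eq_of_notMem {n : ℕ} (f : (Fin n → ℂ) → ℂ) (i : Fin n) (l : List (Fin n))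
    (ν : Fin n → ℕ) (hi : i ∉ l) : lder l (ν + Pi.single i 1) f = lder l ν f := by
  induction l with
  | nil => rfl
  | cons j l ih =>
    simp only [List.mem_cons, not_or] at hi
    simp only [lder_cons, ih hi.2, Pi.add_apply, Pi.single_eq_of_ne (Ne.symm hi.1), add_zero]

lemma lder_add_single {n : ℕ} {f : (Fin n → ℂ) → ℂ} {z : Fin n → ℂ}
    (hf : AnalyticAt ℂ f z) (i : Fin n) (l : List (Fin n)) (ν : Fin n → ℕ) (hl : l.Nodup)
    (hi : i ∈ l) : lder l (ν + Pi.single i 1) f =ᶠ[𝓝 z] lder l ν (pder i f) := by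
  induction l with
  | nil => simp at hi
  | cons j l ih =>
    rw [List.nodup_cons] at hl
    simp only [lder_cons]
    by_cases hj : j = i
    · subst hj
      rw [lder_eq_of_notMem f j l ν hl.1]
      simp only [Pi.add_apply, Pi.single_eq_same, Function.iterate_succ_apply]
      exact pder_iterate_congr (pder_lder hf j l ν) j _
    · have hi' : i ∈ l := by simpa [Ne.symm hj] using hi
      simp only [Pi.add_apply, Pi.single_eq_of_ne hj, add_zero]
      exact pder_iterate_congr (ih hl.2 hi') j _

lemma mder_zero {n : ℕ} (f : (Fin n → ℂ) → ℂ) : mder 0 f = f := by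
  have : ∀ l : List (Fin n), lder l 0 f = f := by
    intro l
    induction l with
    | nil => rfl
    | cons j l ih => rw [lder_cons, ih]; rfl
  exact this _

/-- By the symmetry of mixed partials, a derivative may be taken first rather than in the order
prescribed by `mder`. With `mder_zero` and `mder_congr`, this is all that is used about `mder` below. -/
lemma mder_add_single {n : ℕ} {f : (Fin n → ℂ) → ℂ} (hf : AnalyticAt ℂ f 0) (i : Fin n)
    (ν : Fin n → ℕ) : mder (ν + Pi.single i 1) f 0 = mder ν (pder i f) 0 :=
  (lder_add_single hf i _ ν (List.nodup_finRange n) (List.mem_finRange i)).eq_of_nhds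

lemma mder_congr {n : ℕ} {f g : (Fin n → ℂ) → ℂ} (h : f =ᶠ[𝓝 0] g) (ν : Fin n → ℕ) :
    mder ν f 0 = mder ν g 0 :=
  (lder_congr h _ ν).eq_of_nhds

/-- Induction on multi-indices, by adding one unit vector at a time. -/
lemma multi_induction {n : ℕ} {P : (Fin n → ℕ) → Prop} (h0 : P 0)
    (h1 : ∀ ν i, P ν → P (ν + Pi.single i 1)) (ν : Fin n → ℕ) : P ν := by
  induction h : ∑ i, ν i generalizing ν with
  | zero =>
    have : ν = 0 := by
      funext i
      simpa using (Finset.sum_eq_zero_iff.1 h) i (Finset.mem_univ i)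
    rw [this]; exact h0
  | succ k ih =>
    obtain ⟨i, hi⟩ : ∃ i, ν i ≠ 0 := by
      by_contra! hc
      simp [hc] at h
    have e : ν = (ν - Pi.single i 1) + Pi.single i 1 := by
      funext j
      by_cases hj : j = i
      · subst hj; simp; omega
      · simp [Pi.single_eq_of_ne hj]
    rw [e]
    apply h1
    apply ih
    rw [e] at h
    simp only [Pi.add_apply, Finset.sum_add_distrib, Finset.sum_pi_single', Finset.mem_univ,
      if_true] at h
    omega

lemma pder_add_smul {n : ℕ} {f g : (Fin n → ℂ) → ℂ} (hf : AnalyticAt ℂ f 0)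
    (hg : AnalyticAt ℂ g 0) (c : ℂ) (i : Fin n) :
    pder i (fun z => f z + c * g z) =ᶠ[𝓝 0] fun z => pder i f z + c * pder i g z := by
  filter_upwards [hf.eventually_analyticAt, hg.eventually_analyticAt] with y hfy hgy
  have h := hfy.differentiableAt.hasFDerivAt.add (hgy.differentiableAt.hasFDerivAt.const_mul c)
  have h' : HasFDerivAt (fun z => f z + c * g z) (fderiv ℂ f y + c • fderiv ℂ g y) y := h
  simp only [pder, h'.fderiv]
  simp

lemma mder_add_smul {n : ℕ} {f g : (Fin n → ℂ) → ℂ} (hf : AnalyticAt ℂ f 0)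
    (hg : AnalyticAt ℂ g 0) (c : ℂ) (ν : Fin n → ℕ) :
    mder ν (fun z => f z + c * g z) 0 = mder ν f 0 + c * mder ν g 0 := by
  induction ν using multi_induction generalizing f g with
  | h0 => simp only [mder_zero]
  | h1 ν i ih =>
    have ha : AnalyticAt ℂ (fun z => f z + c * g z) 0 := hf.add (analyticAt_const.mul hg)
    rw [mder_add_single ha, mder_add_single hf,
      mder_add_single hg, mder_congr (pder_add_smul hf hg c i),
      ih (analyticAt_pder hf i) (analyticAt_pder hg i)]

lemma mder_zero_fun {n : ℕ} (ν : Fin n → ℕ) : mder ν (fun _ : Fin n → ℂ => (0 : ℂ)) 0 = 0 := by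
  have := mder_add_smul (f := fun _ : Fin n → ℂ => (0 : ℂ)) (g := fun _ => 0)
    analyticAt_const analyticAt_const (1 : ℂ) ν
  simpa using this

/-! ### Monomials and Taylor polynomials -/

/-- The monomial function `z ↦ z^ν`. -/
noncomputable def mono {n : ℕ} (ν : Fin n → ℕ) : (Fin n → ℂ) → ℂ := fun z => ∏ j, z j ^ ν j

lemma analyticAt_mono {n : ℕ} (ν : Fin n → ℕ) (z : Fin n → ℂ) : AnalyticAt ℂ (mono ν) z := by
  unfold mono
  refine Finset.analyticAt_fun_prod _ fun j _ => ?_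
  exact ((ContinuousLinearMap.proj (R := ℂ) (φ := fun _ : Fin n => ℂ) j).analyticAt z).pow _

lemma pder_mono {n : ℕ} (i : Fin n) (ν : Fin n → ℕ) (z : Fin n → ℂ) :
    pder i (mono ν) z = ν i * mono (ν - Pi.single i 1) z := by
  have h1 : HasLineDerivAt ℂ (mono ν) (pder i (mono ν) z) z (Pi.single i 1) :=
    (analyticAt_mono ν z).differentiableAt.hasFDerivAt.hasLineDerivAt _
  have hsplit : ∀ (μ : Fin n → ℕ) (y : Fin n → ℂ), mono μ y =
      y i ^ μ i * ∏ j ∈ Finset.univ.erase i, y j ^ μ j := fun μ y =>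
    (Finset.mul_prod_erase Finset.univ (fun j => y j ^ μ j) (Finset.mem_univ i)).symm
  have h2 : HasLineDerivAt ℂ (mono ν) (ν i * mono (ν - Pi.single i 1) z) z (Pi.single i 1) := by
    unfold HasLineDerivAt
    have h3 : HasDerivAt (fun t : ℂ => (z i + t) ^ ν i * ∏ j ∈ Finset.univ.erase i, z j ^ ν j)
        ((ν i * (z i + 0) ^ (ν i - 1) * 1) * ∏ j ∈ Finset.univ.erase i, z j ^ ν j) 0 :=
      (((hasDerivAt_id (0 : ℂ)).const_add (z i)).pow (ν i)).mul_const _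
    have ef : (fun t : ℂ => mono ν (z + t • Pi.single i 1)) =
        fun t => (z i + t) ^ ν i * ∏ j ∈ Finset.univ.erase i, z j ^ ν j := by
      funext t
      rw [hsplit]
      congr 1
      · simp
      · refine Finset.prod_congr rfl fun j hj => ?_
        simp [Pi.single_eq_of_ne (Finset.ne_of_mem_erase hj)]
    have ed : (ν i : ℂ) * mono (ν - Pi.single i 1) z =
        (ν i * (z i + 0) ^ (ν i - 1) * 1) * ∏ j ∈ Finset.univ.erase i, z j ^ ν j := by
      rw [hsplit]
      have : ∏ j ∈ Finset.univ.erase i, z j ^ (ν - Pi.single i 1 : Fin n → ℕ) j =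
          ∏ j ∈ Finset.univ.erase i, z j ^ ν j :=
        Finset.prod_congr rfl fun j hj => by
          simp [Pi.single_eq_of_ne (Finset.ne_of_mem_erase hj)]
      rw [this]
      simp
      ring
    rw [ef, ed]
    exact h3
  exact h1.unique h2

lemma mder_mono {n : ℕ} (μ ν : Fin n → ℕ) :
    mder μ (mono ν) 0 = if μ = ν then ((∏ i, (ν i).factorial : ℕ) : ℂ) else 0 := by
  induction μ using multi_induction generalizing ν with
  | h0 =>
    rw [mder_zero]
    split_ifs with h
    · subst h; simp [mono]
    · obtain ⟨i, hi⟩ := Function.ne_iff.1 h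
      exact Finset.prod_eq_zero (Finset.mem_univ i) (by simp [zero_pow (Ne.symm hi)])
  | h1 μ i ih =>
    have e : pder i (mono ν) = fun z => (0 : ℂ) + ν i * mono (ν - Pi.single i 1) z := by
      funext z; rw [pder_mono, zero_add]
    rw [mder_add_single (analyticAt_mono ν 0), e,
      mder_add_smul analyticAt_const (analyticAt_mono _ 0), mder_zero_fun, zero_add, ih]
    by_cases h0 : ν i = 0
    · have : μ + Pi.single i 1 ≠ ν := by
        intro h
        have := congrFun h i
        simp [h0] at this
      simp [h0, this]
    · have e1 : ν = (ν - Pi.single i 1) + Pi.single i 1 := by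
        funext j
        by_cases hj : j = i
        · subst hj; simp; omega
        · simp [Pi.single_eq_of_ne hj]
      have e2 : (μ + Pi.single i 1 = ν) ↔ μ = ν - Pi.single i 1 := by
        conv_lhs => rw [e1]
        exact add_left_inj _
      simp only [e2]
      split_ifs with h
      · have hm : ν i * ∏ j, ((ν - Pi.single i 1 : Fin n → ℕ) j).factorial =
            ∏ j, (ν j).factorial := by
          have he : ∏ j ∈ Finset.univ.erase i, ((ν - Pi.single i 1 : Fin n → ℕ) j).factorial =
              ∏ j ∈ Finset.univ.erase i, (ν j).factorial :=
            Finset.prod_congr rfl fun j hj => by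
              simp [Pi.single_eq_of_ne (Finset.ne_of_mem_erase hj)]
          rw [← Finset.mul_prod_erase Finset.univ _ (Finset.mem_univ i), he,
            ← Finset.mul_prod_erase Finset.univ (fun j => (ν j).factorial) (Finset.mem_univ i),
            ← Nat.mul_factorial_pred h0]
          simp
          ring
        rw [← hm, Nat.cast_mul]
      · simp

/-- The polynomial function `∑_{ν ∈ s} a_ν z^ν`. -/
noncomputable def polyFun {n : ℕ} (s : Finset (Fin n → ℕ)) (a : (Fin n → ℕ) → ℂ) :
    (Fin n → ℂ) → ℂ := fun z => ∑ ν ∈ s, a ν * mono ν z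

lemma analyticAt_polyFun {n : ℕ} (s : Finset (Fin n → ℕ)) (a : (Fin n → ℕ) → ℂ)
    (z : Fin n → ℂ) : AnalyticAt ℂ (polyFun s a) z :=
  Finset.analyticAt_fun_sum _ fun ν _ => analyticAt_const.mul (analyticAt_mono ν z)

lemma pder_polyFun {n : ℕ} (s : Finset (Fin n → ℕ)) (a : (Fin n → ℕ) → ℂ) (i : Fin n)
    (z : Fin n → ℂ) :
    pder i (polyFun s a) z = ∑ ν ∈ s, a ν * (ν i * mono (ν - Pi.single i 1) z) := by
  have h : HasFDerivAt (polyFun s a) (∑ ν ∈ s, a ν • fderiv ℂ (mono ν) z) z :=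
    HasFDerivAt.fun_sum fun ν _ =>
      (analyticAt_mono ν z).differentiableAt.hasFDerivAt.const_mul (a ν)
  unfold pder
  rw [h.fderiv]
  simp only [_root_.sum_apply, smul_apply, smul_eq_mul]
  refine Finset.sum_congr rfl fun ν _ => ?_
  rw [← pder_mono]; rfl

lemma mder_sub_polyFun {n : ℕ} {f : (Fin n → ℂ) → ℂ} (hf : AnalyticAt ℂ f 0)
    (s : Finset (Fin n → ℕ)) (μ : Fin n → ℕ) (hμ : μ ∈ s) :
    mder μ (fun z => f z - polyFun s (coeffOf f) z) 0 = 0 := by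
  have key : ∀ (s : Finset (Fin n → ℕ)) (a : (Fin n → ℕ) → ℂ),
      mder μ (polyFun s a) 0 = ∑ ν ∈ s, a ν * mder μ (mono ν) 0 := by
    intro s a
    induction s using Finset.induction_on with
    | empty =>
      have e : polyFun ∅ a = fun _ : Fin n → ℂ => (0 : ℂ) := by funext z; simp [polyFun]
      rw [e, mder_zero_fun, Finset.sum_empty]
    | insert ν s hν ih =>
      have e : polyFun (insert ν s) a = fun z => polyFun s a z + a ν * mono ν z := by
        funext z; simp only [polyFun, Finset.sum_insert hν, add_comm]
      rw [e, mder_add_smul (analyticAt_polyFun _ _ _) (analyticAt_mono _ _), ih,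
        Finset.sum_insert hν, add_comm]
  have e : (fun z => f z - polyFun s (coeffOf f) z) =
      fun z => f z + (-1) * polyFun s (coeffOf f) z := by funext z; ring
  rw [e, mder_add_smul hf (analyticAt_polyFun _ _ _), key]
  simp only [mder_mono]
  rw [Finset.sum_eq_single_of_mem μ hμ (fun ν _ h => by simp [Ne.symm h])]
  have : ((∏ i, (μ i).factorial : ℕ) : ℂ) ≠ 0 := by
    exact_mod_cast (Finset.prod_pos fun i _ => Nat.factorial_pos _).ne'
  simp only [if_true, coeffOf]
  rw [div_mul_cancel₀ _ this]; ring

/-- Taylor's estimate: an analytic germ whose partial derivatives of order `< N` vanish at `0` is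
`O(‖z‖^N)`. The induction on `N` applies the mean value inequality to the bound on `fderiv` coming
from the partial derivatives. -/
lemma isBigO_of_mder {n : ℕ} (N : ℕ) {g : (Fin n → ℂ) → ℂ} (hg : AnalyticAt ℂ g 0)
    (h : ∀ μ : Fin n → ℕ, ∑ i, μ i < N → mder μ g 0 = 0) :
    g =O[𝓝 0] fun z => ‖z‖ ^ N := by
  induction N generalizing g with
  | zero =>
    simpa using hg.continuousAt.isBigO_one ℝ
  | succ N ih =>
    have hp : ∀ i, pder i g =O[𝓝 0] fun z => ‖z‖ ^ N := fun i => by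
      apply ih (analyticAt_pder hg i)
      intro μ hμ
      rw [← mder_add_single hg]
      apply h
      simp only [Pi.add_apply, Finset.sum_add_distrib, Finset.sum_pi_single', Finset.mem_univ,
        if_true]
      omega
    have hd : (fderiv ℂ g) =O[𝓝 0] fun z => ‖z‖ ^ N := by
      have hs : (fun z => ∑ i, ‖pder i g z‖) =O[𝓝 0] fun z : Fin n → ℂ => ‖z‖ ^ N :=
        Asymptotics.IsBigO.fun_sum fun i _ => (hp i).norm_left
      refine Asymptotics.IsBigO.trans (Asymptotics.IsBigO.of_bound 1 ?_) hs
      filter_upwards with z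
      have hn : 0 ≤ ∑ i, ‖pder i g z‖ := Finset.sum_nonneg fun i _ => norm_nonneg _
      rw [one_mul, Real.norm_of_nonneg hn]
      refine ContinuousLinearMap.opNorm_le_bound _ hn fun x => ?_
      have hx : fderiv ℂ g z x = ∑ i, x i * pder i g z := by
        conv_lhs => rw [pi_eq_sum_univ' x]
        simp only [map_sum, map_smul, smul_eq_mul, pder]
      rw [hx, Finset.sum_mul]
      refine norm_sum_le_of_le _ fun i _ => ?_
      rw [norm_mul, mul_comm]
      exact mul_le_mul_of_nonneg_left (norm_le_pi_norm x i) (norm_nonneg _)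
    obtain ⟨C, hC0, hC⟩ := hd.exists_nonneg
    have hC' := hC.bound
    have hev := hC'.and hg.eventually_analyticAt
    obtain ⟨r, hr, hball⟩ := Metric.eventually_nhds_iff_ball.1 hev
    have hg0 : g 0 = 0 := by
      have := h 0 (by simp)
      rwa [mder_zero] at this
    refine Asymptotics.IsBigO.of_bound C ?_
    filter_upwards [Metric.ball_mem_nhds (0 : Fin n → ℂ) hr] with z hz
    have hz' : ‖z‖ < r := by simpa using hz
    have hsub : ∀ y ∈ Metric.closedBall (0 : Fin n → ℂ) ‖z‖, y ∈ Metric.ball (0 : Fin n → ℂ) r :=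
      fun y hy => by
        have : ‖y‖ ≤ ‖z‖ := by simpa using hy
        simpa using lt_of_le_of_lt this hz'
    have hmv := (convex_closedBall (0 : Fin n → ℂ) ‖z‖).norm_image_sub_le_of_norm_fderiv_le
      (𝕜 := ℂ) (f := g) (C := C * ‖z‖ ^ N) (x := 0) (y := z)
      (fun y hy => (hball y (hsub y hy)).2.differentiableAt)
      (fun y hy => by
        have h1 := (hball y (hsub y hy)).1
        have hy' : ‖y‖ ≤ ‖z‖ := by simpa using hy
        rw [Real.norm_of_nonneg (by positivity)] at h1
        exact h1.trans (by gcongr))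
      (by simp) (by simp)
    rw [hg0, sub_zero, sub_zero] at hmv
    rw [Real.norm_of_nonneg (by positivity), pow_succ, ← mul_assoc]
    exact hmv

/-! ### Orders of one-variable germs -/

lemma ord1_spec {g : ℂ → ℂ} (hg : AnalyticAt ℂ g 0) (h : ¬∀ᶠ t in 𝓝 (0 : ℂ), g t = 0) :
    ∃ u : ℂ → ℂ, AnalyticAt ℂ u 0 ∧ u 0 ≠ 0 ∧ ∀ᶠ t in 𝓝 0, g t = t ^ ord1 g * u t := by
  have ht : analyticOrderAt g 0 ≠ ⊤ := fun e => h (analyticOrderAt_eq_top.1 e)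
  obtain ⟨k, hk⟩ := ENat.ne_top_iff_exists.1 ht
  have hlt := (natCast_le_analyticOrderAt_iff_iteratedDeriv_eq_zero (n := k) hg).1 hk.le
  have hk' : iteratedDeriv k g 0 ≠ 0 := by
    intro h0
    have : ((k + 1 : ℕ) : ℕ∞) ≤ analyticOrderAt g 0 := by
      refine (natCast_le_analyticOrderAt_iff_iteratedDeriv_eq_zero hg).2 fun i hi => ?_
      rcases Nat.lt_succ_iff_lt_or_eq.1 hi with hi | rfl
      · exact hlt i hi
      · exact h0
    rw [← hk] at this
    have : k + 1 ≤ k := by exact_mod_cast this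
    omega
  have hord : ord1 g = k := by
    apply le_antisymm (Nat.sInf_le hk')
    by_contra! hc
    exact Nat.sInf_mem (s := {m | iteratedDeriv m g 0 ≠ 0}) ⟨k, hk'⟩ (hlt _ hc)
  obtain ⟨u, hu, hu0, he⟩ := (hg.analyticOrderAt_eq_natCast (n := k)).1 hk.symm
  refine ⟨u, hu, hu0, ?_⟩
  rw [hord]
  simpa using he

/-- An analytic germ `g` with `t^a g(t) ~ D t^L`, `D ≠ 0`, is nonzero of order at most `L - a`. -/
lemma ord1_le_of_tendsto {g : ℂ → ℂ} (hg : AnalyticAt ℂ g 0) (a L : ℕ) {D : ℂ} (hD : D ≠ 0)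
    (h : Tendsto (fun t => t ^ a * g t / t ^ L) (𝓝[≠] 0) (𝓝 D)) :
    (¬∀ᶠ t in 𝓝 (0 : ℂ), g t = 0) ∧ ord1 g + a ≤ L := by
  have h1 : ¬∀ᶠ t in 𝓝 (0 : ℂ), g t = 0 := by
    intro h0
    apply hD
    refine tendsto_nhds_unique h (tendsto_const_nhds.congr' ?_)
    filter_upwards [h0.filter_mono nhdsWithin_le_nhds] with t ht
    simp [ht]
  refine ⟨h1, ?_⟩
  obtain ⟨u, hu, hu0, he⟩ := ord1_spec hg h1
  by_contra! hc
  obtain ⟨d, hd⟩ := Nat.exists_eq_add_of_lt hc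
  apply hD
  refine tendsto_nhds_unique h ?_
  have hlim : Tendsto (fun t : ℂ => t ^ (d + 1) * u t) (𝓝[≠] 0) (𝓝 0) := by
    have hc : ContinuousAt (fun t : ℂ => t ^ (d + 1) * u t) 0 :=
      ((continuous_pow (d + 1)).continuousAt).mul hu.continuousAt
    have := hc.tendsto
    simp only [ne_eq, Nat.add_eq_zero_iff, one_ne_zero, and_false, not_false_eq_true, zero_pow,
      zero_mul] at this
    exact this.mono_left nhdsWithin_le_nhds
  refine hlim.congr' ?_
  filter_upwards [he.filter_mono nhdsWithin_le_nhds, self_mem_nhdsWithin] with t ht ht0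
  have ht0 : t ≠ 0 := ht0
  rw [ht, eq_div_iff (pow_ne_zero _ ht0), ← mul_assoc, ← pow_add, add_comm a, hd]
  ring

/-! ### The face of the Newton diagram cut out by the weights -/

lemma ell_le {n : ℕ} {f : (Fin n → ℂ) → ℂ} {w : Fin n → ℝ} (hw : ∀ i, 0 ≤ w i)
    {v : Fin n → ℝ} (hv : v ∈ NDiag f) : ell w (NDiag f) ≤ ∑ i, w i * v i := by
  have hnn : NDiag f ⊆ Set.Ici 0 := by
    refine convexHull_min ?_ (convex_Ici 0)
    rintro x ⟨ν, _, hx⟩ i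
    exact le_trans (Nat.cast_nonneg _) (hx i)
  refine csInf_le ⟨0, ?_⟩ ⟨v, hv, rfl⟩
  rintro _ ⟨x, hx, rfl⟩
  exact Finset.sum_nonneg fun i _ => mul_nonneg (hw i) (hnn hx i)

lemma mem_NDiag {n : ℕ} {f : (Fin n → ℂ) → ℂ} {ν : Fin n → ℕ} (hν : coeffOf f ν ≠ 0) :
    (fun i => (ν i : ℝ)) ∈ NDiag f := by
  apply subset_convexHull
  refine ⟨ν, ?_, fun i => le_rfl⟩
  intro h
  exact hν (by simp [coeffOf, h])

/-- The multi-indices with all entries `< N`. -/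
def degBox (n N : ℕ) : Finset (Fin n → ℕ) := Fintype.piFinset fun _ => Finset.range N

/-- The polynomial of the face orthogonal to a positive integral weight `w` is the sum of the terms
of weighted degree `l(w, Γ₊(f))`; these lie in any large enough box. -/
lemma facePoly_eq {n : ℕ} (f : (Fin n → ℂ) → ℂ) (w : Fin n → ℕ) (hw : ∀ i, 1 ≤ w i) (N : ℕ)
    (hN : ell (fun i => (w i : ℝ)) (NDiag f) < N) :
    facePoly f (faceOf (fun i => (w i : ℝ)) (NDiag f)) =
      polyFun ((degBox n N).filter fun ν =>
        ((∑ i, w i * ν i : ℕ) : ℝ) = ell (fun i => (w i : ℝ)) (NDiag f)) (coeffOf f) := by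
  funext z
  unfold facePoly polyFun
  set l := ell (fun i => (w i : ℝ)) (NDiag f) with hl
  set S := faceOf (fun i => (w i : ℝ)) (NDiag f) with hS
  have h1 := tsum_subtype {ν : Fin n → ℕ | (fun i => (ν i : ℝ)) ∈ S}
    (fun ν => coeffOf f ν * ∏ i, z i ^ ν i)
  refine h1.trans ?_
  rw [tsum_eq_sum (s := (degBox n N).filter fun ν => ((∑ i, w i * ν i : ℕ) : ℝ) = l)]
  · refine Finset.sum_congr rfl fun ν hν => ?_
    rw [Finset.mem_filter] at hν
    by_cases h0 : coeffOf f ν = 0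
    · simp [Set.indicator, h0]
    · rw [Set.indicator_of_mem]
      · rfl
      · refine ⟨mem_NDiag h0, ?_⟩
        rw [← hl, ← hν.2]; push_cast; rfl
  · intro ν hν
    refine Set.indicator_of_notMem (fun hmem => hν ?_) _
    have hsum : ((∑ i, w i * ν i : ℕ) : ℝ) = l := by
      rw [hl, ← hmem.2]; push_cast; rfl
    rw [Finset.mem_filter]
    refine ⟨?_, hsum⟩
    simp only [degBox, Fintype.mem_piFinset, Finset.mem_range]
    intro j
    have h2 : ∑ i, w i * ν i < N := by
      have : ((∑ i, w i * ν i : ℕ) : ℝ) < N := by rw [hsum]; exact hN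
      exact_mod_cast this
    have h3 : w j * ν j ≤ ∑ i, w i * ν i :=
      Finset.single_le_sum (f := fun i => w i * ν i) (fun _ _ => Nat.zero_le _) (Finset.mem_univ j)
    have h4 : ν j ≤ w j * ν j := Nat.le_mul_of_pos_left _ (hw j)
    omega

/-! ### Leading terms along the parametrization -/

/-- If `y_j = t^{w_j} x_j`, then `t^{w_i} ∂_i(z^ν)(y) = t^{⟨w,ν⟩} ∂_i(z^ν)(x)`. -/
lemma mono_weighted {n : ℕ} (w : Fin n → ℕ) (i : Fin n) (ν : Fin n → ℕ) (t : ℂ)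
    (x : Fin n → ℂ) :
    t ^ w i * (ν i * mono (ν - Pi.single i 1) (fun j => t ^ w j * x j)) =
      t ^ (∑ j, w j * ν j) * (ν i * mono (ν - Pi.single i 1) x) := by
  by_cases h0 : ν i = 0
  · simp [h0]
  have hm : ∀ μ : Fin n → ℕ, mono μ (fun j => t ^ w j * x j) =
      t ^ (∑ j, w j * μ j) * mono μ x := by
    intro μ
    simp only [mono, mul_pow, Finset.prod_mul_distrib, ← pow_mul, Finset.prod_pow_eq_pow_sum]
  have e1 : ν = (ν - Pi.single i 1) + Pi.single i 1 := by
    funext j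
    by_cases hj : j = i
    · subst hj; simp; omega
    · simp [Pi.single_eq_of_ne hj]
  have hs : ∑ j, w j * ν j = (∑ j, w j * (ν - Pi.single i 1 : Fin n → ℕ) j) + w i := by
    conv_lhs => rw [e1]
    simp only [Pi.add_apply, mul_add, Finset.sum_add_distrib]
    congr 1
    simp [Pi.single_apply]
  rw [hm, hs, pow_add]
  ring

lemma tendsto_poly {n : ℕ} (w : Fin n → ℕ) (i : Fin n) (s : Finset (Fin n → ℕ))
    (a : (Fin n → ℕ) → ℂ) (L : ℕ) (hL : ∀ ν ∈ s, a ν ≠ 0 → L ≤ ∑ j, w j * ν j)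
    (ψ : Fin n → ℂ → ℂ) (hψ : ∀ j, ContinuousAt (ψ j) 0) :
    Tendsto (fun t => t ^ w i * pder i (polyFun s a) (fun j => t ^ w j * ψ j t) / t ^ L) (𝓝[≠] 0)
      (𝓝 (pder i (polyFun (s.filter fun ν => ∑ j, w j * ν j = L) a) fun j => ψ j 0)) := by
  simp only [pder_polyFun, Finset.sum_filter, Finset.mul_sum, Finset.sum_div]
  refine tendsto_finsetSum _ fun ν hν => ?_
  by_cases h0 : a ν = 0
  · simp [h0]
  obtain ⟨d, hd⟩ := Nat.exists_eq_add_of_le (hL ν hν h0)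
  have hc : ContinuousAt (fun t : ℂ => t ^ d *
      (a ν * (ν i * mono (ν - Pi.single i 1) fun j => ψ j t))) 0 := by
    have hm : ContinuousAt (fun t : ℂ => mono (ν - Pi.single i 1) fun j => ψ j t) 0 :=
      (analyticAt_mono (ν - Pi.single i 1) (fun j => ψ j 0)).continuousAt.comp
        (f := fun t j => ψ j t) (continuousAt_pi.2 hψ)
    exact ((continuous_pow d).continuousAt).mul
      (continuousAt_const.mul (continuousAt_const.mul hm))
  have hlim := hc.tendsto.mono_left (nhdsWithin_le_nhds (s := {0}ᶜ))
  have hval : (if ∑ j, w j * ν j = L then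
      a ν * (ν i * mono (ν - Pi.single i 1) fun j => ψ j 0) else 0) =
      (0 : ℂ) ^ d * (a ν * (ν i * mono (ν - Pi.single i 1) fun j => ψ j 0)) := by
    rcases Nat.eq_zero_or_pos d with h | h
    · simp [hd, h]
    · simp [hd, h.ne']
  rw [hval]
  refine hlim.congr' ?_
  filter_upwards [self_mem_nhdsWithin] with t ht0
  have ht0 : t ≠ 0 := ht0
  rw [mul_left_comm (t ^ w i), mono_weighted, hd, eq_div_iff (pow_ne_zero _ ht0), pow_add]
  ring

lemma tendsto_error {k : (ℂ → ℂ)} {a L M : ℕ} (hLM : L < M)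
    (hk : k =O[𝓝 0] fun t : ℂ => ‖t‖ ^ M) :
    Tendsto (fun t => t ^ a * k t / t ^ L) (𝓝[≠] 0) (𝓝 0) := by
  have h1 : (fun t : ℂ => ‖t‖ ^ M) =o[𝓝 0] fun t : ℂ => t ^ L := by
    have : (fun t : ℂ => t ^ M) =o[𝓝 0] fun t : ℂ => t ^ L :=
      Asymptotics.isLittleO_pow_pow hLM
    simpa only [norm_pow] using this.norm_left
  have h2 : (fun t : ℂ => t ^ a) =O[𝓝 0] fun _ => (1 : ℂ) :=
    (continuous_pow a).continuousAt.isBigO_one ℂ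
  have h3 := h2.mul_isLittleO (hk.trans_isLittleO h1)
  simp only [one_mul] at h3
  exact h3.tendsto_div_nhds_zero.mono_left nhdsWithin_le_nhds

/-! ### Orders of the gradient along the parametrization -/

/-- for a nondegenerate singularity `f` and a parametrization `φ` with all
coordinates nonzero, `∇f ∘ φ ≠ 0` and `ord(∇f ∘ φ)/ord φ ≤ m(L) - 1`, where `L` is the
supporting hyperplane of `Γ₊(f)` orthogonal to `w = (ord φ_i)_i`, whose axis intercepts
are `l(w,Γ₊(f))/w_i`. -/
theorem stmt7 {n : ℕ} (f : (Fin n → ℂ) → ℂ) (hf : IsSing f) (hnd : Nondeg f)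
    (φ : Fin n → ℂ → ℂ) (hφ : IsParam φ) :
    (∃ i, ¬∀ᶠ t in 𝓝 (0 : ℂ), pder i f (fun j => φ j t) = 0) ∧
    ((⨅ i, ord1 (fun t => pder i f (fun j => φ j t)) : ℕ) : ℝ) /
        ((⨅ i, ord1 (φ i) : ℕ) : ℝ) ≤
      (⨆ i, ell (fun j => (ord1 (φ j) : ℝ)) (NDiag f) / (ord1 (φ i) : ℝ)) - 1 := by
  have hspec := fun j => ord1_spec (hφ j).1 (hφ j).2.2
  choose ψ hψa hψ0 hψe using hspec
  set w : Fin n → ℕ := fun j => ord1 (φ j) with hw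
  have hw1 : ∀ j, 1 ≤ w j := by
    intro j
    by_contra! hc
    have h0 : ord1 (φ j) = 0 := Nat.lt_one_iff.1 hc
    have := (hψe j).self_of_nhds
    rw [(hφ j).2.1, h0] at this
    simp only [pow_zero, one_mul] at this
    exact hψ0 j this.symm
  set l : ℝ := ell (fun j => (ord1 (φ j) : ℝ)) (NDiag f) with hl
  have hface := hnd (faceOf (fun j => (w j : ℝ)) (NDiag f))
    ⟨_, fun j => by exact_mod_cast hw1 j, rfl⟩
  obtain ⟨M, hM⟩ := exists_nat_gt l
  have hMN : l < (M + 1 : ℕ) := hM.trans (by push_cast; linarith)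
  rw [facePoly_eq f w hw1 (M + 1) hMN] at hface
  obtain ⟨i, hi⟩ : ∃ i, pder i (polyFun ((degBox n (M + 1)).filter fun ν =>
      ((∑ i, w i * ν i : ℕ) : ℝ) = l) (coeffOf f)) (fun j => ψ j 0) ≠ 0 := by
    by_contra! hc
    exact hface ⟨_, hψ0, hc⟩
  -- A nonvanishing term of this derivative shows that `l` is an integer.
  obtain ⟨ν₀, hν₀⟩ : ∃ ν₀ : Fin n → ℕ, ((∑ j, w j * ν₀ j : ℕ) : ℝ) = l := by
    by_contra! hc
    apply hi
    rw [pder_polyFun, Finset.filter_false_of_mem (fun ν _ => hc ν), Finset.sum_empty]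
  set L : ℕ := ∑ j, w j * ν₀ j with hLdef
  have hLM : L < M := by
    have : (L : ℝ) < M := by rw [hν₀]; exact hM
    exact_mod_cast this
  have hfilt : ((degBox n (M + 1)).filter fun ν => ((∑ i, w i * ν i : ℕ) : ℝ) = l) =
      (degBox n (M + 1)).filter fun ν => ∑ j, w j * ν j = L := by
    refine Finset.filter_congr fun ν _ => ?_
    rw [← hν₀]
    exact Nat.cast_inj
  rw [hfilt] at hi
  have hφc : ContinuousAt (fun t j => φ j t) (0 : ℂ) :=
    continuousAt_pi.2 fun j => (hφ j).1.continuousAt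
  have hφ00 : (fun j => φ j 0) = 0 := by funext j; exact (hφ j).2.1
  have hφt : Tendsto (fun t j => φ j t) (𝓝 (0 : ℂ)) (𝓝 0) := by
    have := hφc.tendsto
    rwa [hφ00] at this
  have hpoly := tendsto_poly w i (degBox n (M + 1)) (coeffOf f) L (by
    intro ν _ hν
    have h := ell_le (w := fun j => (w j : ℝ)) (fun j => Nat.cast_nonneg _) (mem_NDiag hν)
    have h' : (L : ℝ) ≤ ((∑ j, w j * ν j : ℕ) : ℝ) := by
      rw [hν₀]; push_cast; exact h
    exact_mod_cast h') ψ (fun j => (hψa j).continuousAt)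
  -- The Taylor remainder contributes only terms of order `≥ M > L`.
  set r : (Fin n → ℂ) → ℂ := fun z => f z - polyFun (degBox n (M + 1)) (coeffOf f) z with hr
  have hra : AnalyticAt ℂ r 0 := hf.1.sub (analyticAt_polyFun _ _ _)
  have hrO : pder i r =O[𝓝 0] fun z => ‖z‖ ^ M := by
    refine isBigO_of_mder M (analyticAt_pder hra i) fun μ hμ => ?_
    rw [← mder_add_single hra]
    apply mder_sub_polyFun hf.1
    simp only [degBox, Fintype.mem_piFinset, Finset.mem_range]
    intro j
    have h1 : (μ + Pi.single i 1 : Fin n → ℕ) j ≤ ∑ j, (μ + Pi.single i 1 : Fin n → ℕ) j :=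
      Finset.single_le_sum (f := fun j => (μ + Pi.single i 1 : Fin n → ℕ) j)
        (fun _ _ => Nat.zero_le _) (Finset.mem_univ j)
    have h2 : ∑ j, (μ + Pi.single i 1 : Fin n → ℕ) j = ∑ j, μ j + 1 := by
      simp [Finset.sum_add_distrib]
    omega
  have hφO : (fun t j => φ j t) =O[𝓝 (0 : ℂ)] fun t : ℂ => t := by
    refine Asymptotics.isBigO_pi.2 fun j => ?_
    have := (hφ j).1.differentiableAt.isBigO_sub
    simpa [(hφ j).2.1] using this
  have hrφ : (fun t => pder i r fun j => φ j t) =O[𝓝 (0 : ℂ)] fun t : ℂ => ‖t‖ ^ M :=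
    (hrO.comp_tendsto hφt).trans (hφO.norm_norm.pow M)
  have herr := tendsto_error (a := w i) hLM hrφ
  have hsplit : ∀ᶠ z in 𝓝 (0 : Fin n → ℂ),
      pder i f z = pder i (polyFun (degBox n (M + 1)) (coeffOf f)) z + pder i r z := by
    have h := pder_add_smul (analyticAt_polyFun (degBox n (M + 1)) (coeffOf f) 0) hra 1 i
    have e : (fun z => polyFun (degBox n (M + 1)) (coeffOf f) z + 1 * r z) = f := by
      funext z; simp [hr]
    rw [e] at h
    filter_upwards [h] with z hz
    rw [hz, one_mul]
  have hg : AnalyticAt ℂ (fun t => pder i f fun j => φ j t) 0 := by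
    have h1 : AnalyticAt ℂ (pder i f) (fun j => φ j 0) := by
      rw [hφ00]; exact analyticAt_pder hf.1 i
    exact h1.comp (f := fun t j => φ j t) (AnalyticAt.pi fun j => (hφ j).1)
  have hmain : Tendsto (fun t => t ^ w i * (pder i f fun j => φ j t) / t ^ L) (𝓝[≠] 0)
      (𝓝 (pder i (polyFun ((degBox n (M + 1)).filter fun ν => ∑ j, w j * ν j = L) (coeffOf f))
        fun j => ψ j 0)) := by
    have := hpoly.add herr
    rw [add_zero] at this
    refine this.congr' ?_
    have hall : ∀ᶠ t in 𝓝 (0 : ℂ), ∀ j, φ j t = t ^ w j * ψ j t := eventually_all.2 hψe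
    filter_upwards [nhdsWithin_le_nhds hall, nhdsWithin_le_nhds (hφt.eventually hsplit)]
      with t ht1 ht2
    have e : (fun j => t ^ w j * ψ j t) = fun j => φ j t := by funext j; rw [ht1 j]
    rw [e, ht2]
    ring
  obtain ⟨hne, hle⟩ := ord1_le_of_tendsto hg (w i) L hi hmain
  refine ⟨⟨i, hne⟩, ?_⟩
  have : Nonempty (Fin n) := ⟨i⟩
  obtain ⟨k, hk⟩ : ∃ k, w k = ⨅ j, w j := Nat.sInf_mem (Set.range_nonempty w)
  have hki : w k ≤ w i := hk ▸ ciInf_le (OrderBot.bddBelow _) i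
  -- Coordinates with `∂_j f ∘ φ = 0` get the value `ord1 = 0`, which only lowers this infimum.
  have hA : (⨅ i, ord1 fun t => pder i f fun j => φ j t) ≤
      ord1 (fun t => pder i f fun j => φ j t) := ciInf_le (OrderBot.bddBelow _) i
  have hsup : l / (w k : ℝ) ≤ ⨆ j, l / (ord1 (φ j) : ℝ) :=
    le_ciSup (f := fun j => l / (ord1 (φ j) : ℝ)) (Set.finite_range _).bddAbove k
  have hkpos : (0 : ℝ) < w k := by exact_mod_cast hw1 k
  have hnum : (((⨅ i, ord1 fun t => pder i f fun j => φ j t : ℕ)) : ℝ) + w k ≤ l := by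
    rw [← hν₀]
    have : (⨅ i, ord1 fun t => pder i f fun j => φ j t) + w k ≤ L := by omega
    exact_mod_cast this
  rw [← hk]
  refine le_trans ?_ (sub_le_sub_right hsup 1)
  rw [div_le_iff₀ hkpos, sub_mul, div_mul_cancel₀ _ hkpos.ne']
  linarith
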